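/- Let A be a Hadamard matrix of order h ≥ 4, let d ≥ 1, and for each B ∈ {−1,1}^{h×d} define C by c_{ij} = sgn((AᵀB)_{ji}), F = C A⁻¹ B, and G = F + I. Then, averaging over all 2^{hd} equally likely choices of B, E[∏_{i=1}^d g_{ii}] = (1 + 2^{−h}·h·binom(h, h/2))^d. -/

import Mathlib

/-!
Since `A⁻¹ = h⁻¹ Aᵀ`, multiplying each entry of `Aᵀ B` by its own sign gives
`Fᵢᵢ = h⁻¹ ∑ⱼ |⟨aⱼ, bᵢ⟩|`, where `aⱼ` and `bᵢ` are the columns of `A` and `B`. So `gᵢᵢ` depends only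
on `bᵢ`, and independence of the columns turns the expected product into a `d`-th power. Replacing
`b` by its entrywise product with the sign vector `aⱼ` preserves the uniform distribution, so each
`E|⟨aⱼ, b⟩|` is the mean absolute position of the simple random walk after `h` steps, a binomial sum
that telescopes.
-/

open Matrix

/-- The `±1` sign function: `sgn x = 1` if `x ≥ 0`, `−1` if `x < 0`. -/
noncomputable def sgn (x : ℝ) : ℝ := if 0 ≤ x then 1 else -1

/-- The `h × d` sign matrix corresponding to a Boolean matrix `b`. -/
noncomputable def signMat {h d : ℕ} (b : Fin h → Fin d → Bool) :
    Matrix (Fin h) (Fin d) ℝ :=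
  Matrix.of fun i j => if b i j then (1 : ℝ) else -1

/-- The matrix `C` with `c_{ij} = sgn((Aᵀ B)_{ji})`. -/
noncomputable def Cmat {h d : ℕ} (A : Matrix (Fin h) (Fin h) ℝ)
    (B : Matrix (Fin h) (Fin d) ℝ) : Matrix (Fin d) (Fin h) ℝ :=
  Matrix.of fun i j => sgn ((Aᵀ * B) j i)

/-- The matrix `F = C A⁻¹ B`. -/
noncomputable def Fmat {h d : ℕ} (A : Matrix (Fin h) (Fin h) ℝ)
    (B : Matrix (Fin h) (Fin d) ℝ) : Matrix (Fin d) (Fin d) ℝ :=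
  Cmat A B * A⁻¹ * B

/-- Expectation of `f(B)`, averaged over the `2^(h·d)` equally likely
`h × d` matrices `B` with entries in `{−1, 1}`. -/
noncomputable def expec (h d : ℕ) (f : Matrix (Fin h) (Fin d) ℝ → ℝ) : ℝ :=
  (∑ b : Fin h → Fin d → Bool, f (signMat b)) / 2 ^ (h * d)

open scoped BigOperators

section BinomialDeviation

variable {R : Type*} [CommRing R]

theorem choose_mul_two_mul_sub (n j : ℕ) :
    (n.choose j : R) * (2 * j - n) =
      j * n.choose j - (j + 1 : ℕ) * n.choose (j + 1) := by
  have absorption : ((n : R) + 1) * n.choose j = (n.choose j + n.choose (j + 1)) * (j + 1) := by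
    exact_mod_cast congrArg (Nat.cast (R := R))
      (Nat.choose_succ_succ' n j ▸ Nat.add_one_mul_choose_eq n j)
  push_cast
  linear_combination -absorption

theorem sum_choose_mul_abs_two_mul_sub [LinearOrder R] [IsStrictOrderedRing R] (n : ℕ) :
    ∑ j ∈ Finset.range (n + 1), (n.choose j : R) * |2 * (j : R) - n| =
      2 * ((n + 1) / 2 : ℕ) * n.choose ((n + 1) / 2) := by
  set p := (n + 1) / 2
  let g (j : ℕ) : R := j * n.choose j
  have below : ∑ j ∈ Finset.range p, (n.choose j : R) * |2 * (j : R) - n| = g p := by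
    calc
      _ = ∑ j ∈ Finset.range p, (g (j + 1) - g j) := by
        refine Finset.sum_congr rfl fun j hj ↦ ?_
        have hjn : 2 * (j : R) ≤ n := by
          exact_mod_cast (by grind : 2 * j ≤ n)
        rw [abs_of_nonpos (sub_nonpos.2 hjn), mul_neg, choose_mul_two_mul_sub, neg_sub]
      _ = g p := by
        rw [Finset.sum_range_sub g]
        simp [g]
  have above : ∑ j ∈ Finset.Ico p (n + 1), (n.choose j : R) * |2 * (j : R) - n| = g p := by
    calc
      _ = ∑ j ∈ Finset.Ico p (n + 1), -(g (j + 1) - g j) := by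
        refine Finset.sum_congr rfl fun j hj ↦ ?_
        have hnj : (n : R) ≤ 2 * j := by
          exact_mod_cast (by grind : n ≤ 2 * j)
        rw [abs_of_nonneg (sub_nonneg.2 hnj), choose_mul_two_mul_sub, neg_sub]
      _ = g p := by
        rw [Finset.sum_neg_distrib, Finset.sum_Ico_sub g (by lia)]
        simp [g]
  rw [← Finset.sum_range_add_sum_Ico _ (by lia : p ≤ n + 1), below, above]
  ring

end BinomialDeviation

section SignVectors

variable {ι : Type*} [Fintype ι]

/-- The vector of signs encoded by a Boolean vector: `true ↦ 1`, `false ↦ -1`. A uniformly random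
sign vector is modelled as `signVec v` with `v` averaged over `ι → Bool`. -/
def signVec (v : ι → Bool) : ι → ℝ := fun k ↦ if v k then 1 else -1

theorem sum_signVec (v : ι → Bool) :
    ∑ k, signVec v k = 2 * (Finset.card {k | v k} : ℝ) - Fintype.card ι := by
  have affine (k : ι) : signVec v k = 2 * (if v k then 1 else 0) - 1 := by
    cases h : v k <;> norm_num [signVec, h]
  simp only [affine, Finset.sum_sub_distrib, ← Finset.mul_sum, Finset.sum_boole, Finset.sum_const,
    Finset.card_univ, nsmul_one]

variable [DecidableEq ι]

theorem sum_apply_card_true {M : Type*} [AddCommMonoid M] (f : ℕ → M) :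
    ∑ v : ι → Bool, f (Finset.card {k | v k}) =
      ∑ j ∈ Finset.range (Fintype.card ι + 1), (Fintype.card ι).choose j • f j := by
  calc
    _ = ∑ s : Finset ι, f s.card :=
      Finset.sum_nbij' (fun v ↦ ({k | v k} : Finset ι)) (fun s k ↦ decide (k ∈ s))
        (by simp) (by simp) (by simp) (by simp) (by simp)
    _ = _ := by
      rw [← Finset.powerset_univ, Finset.sum_powerset_apply_card, Finset.card_univ]

theorem expect_abs_sum_signVec :
    𝔼 v : ι → Bool, |∑ k, signVec v k| =
      2 * ((Fintype.card ι + 1) / 2 : ℕ) *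
        (Fintype.card ι).choose ((Fintype.card ι + 1) / 2) / 2 ^ Fintype.card ι := by
  simp only [Fintype.expect_eq_sum_div_card, sum_signVec]
  rw [sum_apply_card_true fun j ↦ |2 * (j : ℝ) - Fintype.card ι|]
  simp only [nsmul_eq_mul, sum_choose_mul_abs_two_mul_sub, Fintype.card_fun, Fintype.card_bool,
    Nat.cast_pow, Nat.cast_ofNat]

theorem expect_apply_mul_signVec {M : Type*} [AddCommMonoid M] [Module ℚ≥0 M] (f : (ι → ℝ) → M)
    {a : ι → ℝ} (ha : ∀ k, a k = 1 ∨ a k = -1) :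
    𝔼 v : ι → Bool, f (a * signVec v) = 𝔼 v : ι → Bool, f (signVec v) := by
  let flip (v : ι → Bool) (k : ι) : Bool := if a k = 1 then v k else !v k
  have flip_involutive : Function.Involutive flip := by
    intro v
    ext k
    by_cases hk : a k = 1 <;> simp [flip, hk]
  have signVec_flip (v : ι → Bool) : a * signVec v = signVec (flip v) := by
    ext k
    rcases ha k with hk | hk <;> cases hv : v k <;> norm_num [signVec, flip, hk, hv]
  exact Fintype.expect_bijective flip flip_involutive.bijective _ _ fun v ↦ by rw [signVec_flip]

theorem expect_abs_dotProduct_signVec {a : ι → ℝ} (ha : ∀ k, a k = 1 ∨ a k = -1)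
    (hι : Even (Fintype.card ι)) :
    𝔼 v : ι → Bool, |a ⬝ᵥ signVec v| =
      Fintype.card ι * (Fintype.card ι).choose (Fintype.card ι / 2) / 2 ^ Fintype.card ι := by
  have half : (Fintype.card ι + 1) / 2 = Fintype.card ι / 2 := by grind
  have double_half : 2 * ((Fintype.card ι / 2 : ℕ) : ℝ) = Fintype.card ι := by
    exact_mod_cast Nat.two_mul_div_two_of_even hι
  calc
    _ = 𝔼 v : ι → Bool, |∑ k, signVec v k| :=
      expect_apply_mul_signVec (fun x ↦ |∑ k, x k|) ha
    _ = _ := by rw [expect_abs_sum_signVec, half, double_half]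

theorem expect_sum_abs_dotProduct_signVec {κ : Type*} [Fintype κ] {a : κ → ι → ℝ}
    (ha : ∀ j k, a j k = 1 ∨ a j k = -1) (hι : Even (Fintype.card ι)) :
    𝔼 v : ι → Bool, ∑ j, |a j ⬝ᵥ signVec v| =
      Fintype.card κ *
        (Fintype.card ι * (Fintype.card ι).choose (Fintype.card ι / 2) / 2 ^ Fintype.card ι) := by
  simp only [Finset.expect_sum_comm, expect_abs_dotProduct_signVec (ha _) hι, Finset.sum_const,
    Finset.card_univ, nsmul_eq_mul]

end SignVectors

theorem expec_eq_expect (h d : ℕ) (f : Matrix (Fin h) (Fin d) ℝ → ℝ) :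
    expec h d f = 𝔼 b : Fin h → Fin d → Bool, f (signMat b) := by
  simp [expec, Fintype.expect_eq_sum_div_card, ← pow_mul, mul_comm]

theorem expec_prod_col (h d : ℕ) (f : Fin d → (Fin h → ℝ) → ℝ) :
    expec h d (fun B ↦ ∏ i, f i (B.col i)) = ∏ i, 𝔼 v : Fin h → Bool, f i (signVec v) := by
  calc
    _ = 𝔼 b : Fin d → Fin h → Bool, ∏ i, f i (signVec (b i)) := by
      rw [expec_eq_expect]
      exact Fintype.expect_equiv (Equiv.piComm _) _ _ fun _ ↦ rfl
    _ = ∏ i, 𝔼 v : Fin h → Bool, f i (signVec v) := by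
      simp [Fintype.expect_eq_sum_div_card, Finset.prod_div_distrib, Fintype.prod_sum]

theorem sgn_mul_self (x : ℝ) : sgn x * x = |x| := by
  rcases le_or_gt 0 x with hx | hx
  · rw [sgn, if_pos hx, one_mul, abs_of_nonneg hx]
  · rw [sgn, if_neg hx.not_ge, neg_one_mul, abs_of_neg hx]

theorem inv_eq_inv_smul_transpose {n K : Type*} [Fintype n] [DecidableEq n] [Field K]
    {A : Matrix n n K} {c : K} (hc : c ≠ 0) (hA : Aᵀ * A = c • 1) : A⁻¹ = c⁻¹ • Aᵀ :=
  Matrix.inv_eq_left_inv <| by rw [Matrix.smul_mul, hA, inv_smul_smul₀ hc]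

theorem Fmat_apply_self {h d : ℕ} {A : Matrix (Fin h) (Fin h) ℝ} {c : ℝ} (hc : c ≠ 0)
    (hA : Aᵀ * A = c • 1) (B : Matrix (Fin h) (Fin d) ℝ) (i : Fin d) :
    Fmat A B i i = c⁻¹ * ∑ j, |A.col j ⬝ᵥ B.col i| := by
  calc
    _ = c⁻¹ * (Cmat A B * (Aᵀ * B)) i i := by
      rw [Fmat, inv_eq_inv_smul_transpose hc hA, Matrix.mul_smul, Matrix.smul_mul,
        Matrix.mul_assoc, Matrix.smul_apply, smul_eq_mul]
    _ = c⁻¹ * ∑ j, |(Aᵀ * B) j i| := by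
      rw [Matrix.mul_apply]
      simp only [Cmat, Matrix.of_apply, sgn_mul_self]
    _ = c⁻¹ * ∑ j, |A.col j ⬝ᵥ B.col i| := rfl

/-- Let `A` be a Hadamard matrix of order `h ≥ 4` (so `4 ∣ h`), `d ≥ 1`, and
for each `B ∈ {−1,1}^{h×d}` set `C = sgn(AᵀB)ᵀ`, `F = C A⁻¹ B`, `G = F + I`.
Then, averaging over all `2^{hd}` equally likely choices of `B`,
`E[∏_{i=1}^d g_{ii}] = (1 + 2^{−h} h binom(h, h/2))^d`. -/
theorem expec_prod_G_diag (h d : ℕ) (h4 : 4 ∣ h) (hh : 4 ≤ h) (hd : 1 ≤ d)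
    (A : Matrix (Fin h) (Fin h) ℝ)
    (hA1 : ∀ i j, A i j = 1 ∨ A i j = -1)
    (hA2 : Aᵀ * A = (h : ℝ) • 1) :
    expec h d (fun B => ∏ i : Fin d, (Fmat A B + 1) i i) =
      (1 + (2 : ℝ) ^ (-(h : ℤ)) * h * (h.choose (h / 2) : ℝ)) ^ d := by
  have h_ne : (h : ℝ) ≠ 0 := Nat.cast_ne_zero.2 (by lia)
  have h_even : Even (Fintype.card (Fin h)) := by
    rw [Fintype.card_fin]
    exact even_iff_two_dvd.2 (dvd_trans (by norm_num) h4)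
  have col_signs (j k : Fin h) : A.col j k = 1 ∨ A.col j k = -1 := hA1 k j
  calc
    _ = expec h d fun B ↦ ∏ i, (1 + (h : ℝ)⁻¹ * ∑ j, |A.col j ⬝ᵥ B.col i|) := by
      simp only [Matrix.add_apply, Matrix.one_apply_eq, Fmat_apply_self h_ne hA2, add_comm]
    _ = (𝔼 v : Fin h → Bool, (1 + (h : ℝ)⁻¹ * ∑ j, |A.col j ⬝ᵥ signVec v|)) ^ d := by
      rw [expec_prod_col h d fun _ x ↦ 1 + (h : ℝ)⁻¹ * ∑ j, |A.col j ⬝ᵥ x|, Fin.prod_const]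
    _ = (1 + (h : ℝ)⁻¹ * (h * (h * h.choose (h / 2) / 2 ^ h))) ^ d := by
      rw [Finset.expect_add_distrib, Fintype.expect_const, ← Finset.mul_expect,
        expect_sum_abs_dotProduct_signVec col_signs h_even, Fintype.card_fin]
    _ = (1 + (2 : ℝ) ^ (-(h : ℤ)) * h * (h.choose (h / 2) : ℝ)) ^ d := by
      rw [inv_mul_cancel_left₀ h_ne, _root_.zpow_neg, zpow_natCast]
      ring
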